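/- For any graph function α and any vertex v, the momentum satisfies m_v ≤ ρ(S_v) + z_v. -/

import Mathlib

open Filter Topology

variable {V : Type*}

/-- Maximum weight of an edge leaving `v` (as a supremum over the finite edge set). -/
noncomputable def outMax (E : V → V → Prop) (α : V → V → ℝ) (v : V) : ℝ :=
  sSup {x : ℝ | ∃ w, E v w ∧ x = α v w}

/-- Maximum weight of an edge entering `v`. -/
noncomputable def inMax (E : V → V → Prop) (α : V → V → ℝ) (v : V) : ℝ :=
  sSup {x : ℝ | ∃ u, E u v ∧ x = α u v}

/-- A graph function is balanced if the max outgoing weight equals the max incoming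
weight at every vertex. -/
def IsBalancedGF (E : V → V → Prop) (α : V → V → ℝ) : Prop :=
  ∀ v, outMax E α v = inMax E α v

/-- Raising imbalance at `v`. -/
noncomputable def rhoR (E : V → V → Prop) (α : V → V → ℝ) (v : V) : ℝ :=
  max 0 (outMax E α v - inMax E α v)

/-- Lowering imbalance at `v`. -/
noncomputable def rhoL (E : V → V → Prop) (α : V → V → ℝ) (v : V) : ℝ :=
  max 0 (inMax E α v - outMax E α v)

/-- A balancing operation at `v`: add `(α_v^out − α_v^in)/2` to every edge entering `v`
and subtract the same quantity from every edge leaving `v` (a self-loop is unchanged). -/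
noncomputable def balanceAt [DecidableEq V] (E : V → V → Prop) (α : V → V → ℝ) (v : V) :
    V → V → ℝ :=
  fun a b =>
    α a b + (if b = v then (outMax E α v - inMax E α v) / 2 else 0)
          - (if a = v then (outMax E α v - inMax E α v) / 2 else 0)

/-- A raising operation at `v`: balance at `v` if the raising imbalance is positive,
otherwise do nothing. -/
noncomputable def raiseOp [DecidableEq V] (E : V → V → Prop) (α : V → V → ℝ) (v : V) :
    V → V → ℝ :=
  if 0 < rhoR E α v then balanceAt E α v else α

/-- A lowering operation at `v`: balance at `v` if the lowering imbalance is positive,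
otherwise do nothing. -/
noncomputable def lowerOp [DecidableEq V] (E : V → V → Prop) (α : V → V → ℝ) (v : V) :
    V → V → ℝ :=
  if 0 < rhoL E α v then balanceAt E α v else α

/-- A sequence of vertices is fair if every vertex appears infinitely often. -/
def Fair (σ : ℕ → V) : Prop := ∀ (v : V) (N : ℕ), ∃ t, N ≤ t ∧ σ t = v

/-- State after `t` raising operations along the sequence `σ`. -/
noncomputable def raiseIter [DecidableEq V] (E : V → V → Prop) (α : V → V → ℝ)
    (σ : ℕ → V) : ℕ → V → V → ℝ
  | 0 => α
  | t + 1 => raiseOp E (raiseIter E α σ t) (σ t)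

/-- State after `t` lowering operations along the sequence `σ`. -/
noncomputable def lowerIter [DecidableEq V] (E : V → V → Prop) (α : V → V → ℝ)
    (σ : ℕ → V) : ℕ → V → V → ℝ
  | 0 => α
  | t + 1 => lowerOp E (lowerIter E α σ t) (σ t)

/-- The raising vector: cumulative amount by which each vertex has been raised after
`t` raising operations along `σ`. -/
noncomputable def rvec [DecidableEq V] (E : V → V → Prop) (α : V → V → ℝ)
    (σ : ℕ → V) : ℕ → V → ℝ
  | 0 => fun _ => 0
  | t + 1 => fun u =>
      rvec E α σ t u + (if u = σ t then rhoR E (raiseIter E α σ t) (σ t) / 2 else 0)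

/-- State after performing raising operations along a finite list of vertices. -/
noncomputable def raiseList [DecidableEq V] (E : V → V → Prop) :
    (V → V → ℝ) → List V → V → V → ℝ
  | α, [] => α
  | α, v :: l => raiseList E (raiseOp E α v) l

/-- Raising vector accumulated along a finite list of raising operations. -/
noncomputable def rvecList [DecidableEq V] (E : V → V → Prop) :
    (V → V → ℝ) → List V → V → ℝ
  | _, [] => fun _ => 0
  | α, v :: l => fun u =>
      (if u = v then rhoR E α v / 2 else 0) + rvecList E (raiseOp E α v) l u

/-- State after performing (unconditional) balancing operations along a list. -/
noncomputable def balList [DecidableEq V] (E : V → V → Prop) :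
    (V → V → ℝ) → List V → V → V → ℝ
  | α, [] => α
  | α, v :: l => balList E (balanceAt E α v) l

/-- State after `t` balancing operations along the sequence `σ`. -/
noncomputable def balIter [DecidableEq V] (E : V → V → Prop) (α : V → V → ℝ)
    (σ : ℕ → V) : ℕ → V → V → ℝ
  | 0 => α
  | t + 1 => balanceAt E (balIter E α σ t) (σ t)

/-- Two graph functions are equivalent if their sums around every directed cycle agree. -/
def Equivalent (E : V → V → Prop) (α γ : V → V → ℝ) : Prop :=
  ∀ (k : ℕ) (f : ZMod (k + 1) → V), (∀ i, E (f i) (f (i + 1))) →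
    (∑ i, α (f i) (f (i + 1))) = ∑ i, γ (f i) (f (i + 1))

/-- The raising-balanced graph function determined by the limiting raising vector. -/
noncomputable def alphaR (α : V → V → ℝ) (rstar : V → ℝ) : V → V → ℝ :=
  fun u v => α u v + rstar v - rstar u

/-- Height of a vertex: `y_v = -r*_v`. -/
noncomputable def height (rstar : V → ℝ) (v : V) : ℝ := -rstar v

/-- Level of a vertex: maximum over incoming edges of `α^R`. -/
noncomputable def level (E : V → V → Prop) (α : V → V → ℝ) (rstar : V → ℝ) (v : V) : ℝ :=
  inMax E (alphaR α rstar) v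

/-- Momentum of a vertex: `m_v = max over edges (u,v) entering v of (α_{uv} − x_v)`. -/
noncomputable def momentum (E : V → V → Prop) (α : V → V → ℝ) (rstar : V → ℝ) (v : V) : ℝ :=
  sSup {c : ℝ | ∃ u, E u v ∧ c = α u v - level E α rstar v}

/-!
An edge `(u, v)` with `y_v ≤ y_u` satisfies `α_{uv} ≤ α_{uv} + y_u - y_v = α^R_{uv} ≤ x_v`. If
instead `y_u < y_v`, then `α_{uv} ≤ α_u^out ≤ α_u^in + ρ_u^R`. Bounding `α_u^in` inductively by
`ρ(S_u)` plus the largest level up to height `y_u` and using `S_u ∪ {u} ⊆ S_v`, where `u ∉ S_u`,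
absorbs the extra `ρ_u^R` into `ρ(S_v)`.
-/

section FiniteSuprema

variable {ι β : Type*} [ConditionallyCompleteLattice β] {p : ι → Prop} {f : ι → β}

theorem le_csSup_setOf_exists_eq [Finite ι] {i : ι} (hi : p i) :
    f i ≤ sSup {c : β | ∃ j, p j ∧ c = f j} := by
  have : Nonempty β := ⟨f i⟩
  have hsub : {c : β | ∃ j, p j ∧ c = f j} ⊆ Set.range f := by
    rintro _ ⟨j, -, rfl⟩
    exact Set.mem_range_self j
  exact le_csSup ((Set.finite_range f).subset hsub).bddAbove ⟨i, hi, rfl⟩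

theorem csSup_setOf_exists_eq_le {a : β} (hp : ∃ i, p i) (hf : ∀ i, p i → f i ≤ a) :
    sSup {c : β | ∃ i, p i ∧ c = f i} ≤ a := by
  obtain ⟨i, hi⟩ := hp
  refine csSup_le ⟨f i, i, hi, rfl⟩ ?_
  rintro _ ⟨j, hj, rfl⟩
  exact hf j hj

end FiniteSuprema

section Weights

variable {E : V → V → Prop} {α : V → V → ℝ} {u v : V}

theorem le_outMax [Finite V] (huv : E u v) : α u v ≤ outMax E α u :=
  le_csSup_setOf_exists_eq huv

theorem le_inMax [Finite V] (huv : E u v) : α u v ≤ inMax E α v :=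
  le_csSup_setOf_exists_eq (f := fun u => α u v) huv

theorem inMax_le {a : ℝ} (hin : ∃ u, E u v) (hα : ∀ u, E u v → α u v ≤ a) : inMax E α v ≤ a :=
  csSup_setOf_exists_eq_le hin hα

theorem rhoR_nonneg (E : V → V → Prop) (α : V → V → ℝ) (v : V) : 0 ≤ rhoR E α v :=
  le_max_left _ _

theorem outMax_le_inMax_add_rhoR (E : V → V → Prop) (α : V → V → ℝ) (v : V) :
    outMax E α v ≤ inMax E α v + rhoR E α v :=
  sub_le_iff_le_add'.1 (le_max_right _ _)

theorem le_level_of_height_le [Finite V] {r : V → ℝ} (huv : E u v)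
    (hle : height r v ≤ height r u) : α u v ≤ level E α r v := by
  have hα : α u v ≤ alphaR α r u v := by
    simp only [height, alphaR] at hle ⊢
    linarith
  exact hα.trans (le_inMax huv)

end Weights

open scoped Classical in
/-- The set `S_v = {u : y_u < y_v}`, for the heights `y = -r` of an arbitrary vector `r`. -/
noncomputable def strictlyBelow [Fintype V] (r : V → ℝ) (v : V) : Finset V :=
  Finset.univ.filter fun u => height r u < height r v

/-- The total raising imbalance `ρ(S_v)` of the vertices strictly lower than `v`. -/
noncomputable def imbalanceBelow [Fintype V] (E : V → V → Prop) (α : V → V → ℝ) (r : V → ℝ)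
    (v : V) : ℝ :=
  ∑ u ∈ strictlyBelow r v, rhoR E α u

/-- The largest level `max{x_u : y_u ≤ y_v}` of a vertex no higher than `v`, encoded as a supremum,
so that `z_v = maxLevelUpTo E α r v - level E α r v`. -/
noncomputable def maxLevelUpTo (E : V → V → Prop) (α : V → V → ℝ) (r : V → ℝ) (v : V) : ℝ :=
  sSup {c : ℝ | ∃ u, height r u ≤ height r v ∧ c = level E α r u}

section Below

variable {E : V → V → Prop} {α : V → V → ℝ} {r : V → ℝ} {u v : V}

theorem mem_strictlyBelow [Fintype V] : u ∈ strictlyBelow r v ↔ height r u < height r v := by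
  simp only [strictlyBelow, Finset.mem_filter_univ]

theorem imbalanceBelow_nonneg [Fintype V] (E : V → V → Prop) (α : V → V → ℝ) (r : V → ℝ) (v : V) :
    0 ≤ imbalanceBelow E α r v :=
  Finset.sum_nonneg fun u _ => rhoR_nonneg E α u

theorem imbalanceBelow_add_rhoR_le [Fintype V] (hlt : height r u < height r v) :
    imbalanceBelow E α r u + rhoR E α u ≤ imbalanceBelow E α r v := by
  have hnotMem : u ∉ strictlyBelow r u := fun hu => lt_irrefl _ (mem_strictlyBelow.1 hu)
  have hsub : (strictlyBelow r u).cons u hnotMem ⊆ strictlyBelow r v :=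
    Finset.cons_subset.2 ⟨mem_strictlyBelow.2 hlt, fun w hw =>
      mem_strictlyBelow.2 ((mem_strictlyBelow.1 hw).trans hlt)⟩
  calc imbalanceBelow E α r u + rhoR E α u
      = ∑ w ∈ (strictlyBelow r u).cons u hnotMem, rhoR E α w := by
        rw [Finset.sum_cons, add_comm, imbalanceBelow]
    _ ≤ imbalanceBelow E α r v :=
        Finset.sum_le_sum_of_subset_of_nonneg hsub fun w _ _ => rhoR_nonneg E α w

theorem level_le_maxLevelUpTo [Finite V] (hle : height r u ≤ height r v) :
    level E α r u ≤ maxLevelUpTo E α r v :=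
  le_csSup_setOf_exists_eq (f := level E α r) hle

theorem maxLevelUpTo_mono [Finite V] (hle : height r u ≤ height r v) :
    maxLevelUpTo E α r u ≤ maxLevelUpTo E α r v :=
  csSup_setOf_exists_eq_le ⟨u, le_rfl⟩ fun _ hw => level_le_maxLevelUpTo (hw.trans hle)

theorem inMax_le_imbalanceBelow_add_maxLevelUpTo [Fintype V] (hin : ∀ v, ∃ u, E u v)
    (α : V → V → ℝ) (r : V → ℝ) (v : V) :
    inMax E α v ≤ imbalanceBelow E α r v + maxLevelUpTo E α r v := by
  have hwf : WellFounded fun u w => height r u < height r w :=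
    Set.wellFoundedOn_range.1 (Set.finite_range (height r)).wellFoundedOn
  induction v using hwf.induction with
  | _ v ih =>
    refine inMax_le (hin v) fun u huv => ?_
    rcases lt_or_ge (height r u) (height r v) with hlt | hge
    · calc α u v ≤ outMax E α u := le_outMax huv
        _ ≤ inMax E α u + rhoR E α u := outMax_le_inMax_add_rhoR E α u
        _ ≤ imbalanceBelow E α r u + maxLevelUpTo E α r u + rhoR E α u := by
          gcongr
          exact ih u hlt
        _ = (imbalanceBelow E α r u + rhoR E α u) + maxLevelUpTo E α r u := add_right_comm _ _ _
        _ ≤ imbalanceBelow E α r v + maxLevelUpTo E α r v :=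
          add_le_add (imbalanceBelow_add_rhoR_le hlt) (maxLevelUpTo_mono hlt.le)
    · calc α u v ≤ level E α r v := le_level_of_height_le huv hge
        _ ≤ maxLevelUpTo E α r v := level_le_maxLevelUpTo le_rfl
        _ ≤ imbalanceBelow E α r v + maxLevelUpTo E α r v :=
          le_add_of_nonneg_left (imbalanceBelow_nonneg E α r v)

theorem momentum_le_inMax_sub_level [Finite V] (hin : ∃ u, E u v) (α : V → V → ℝ) (r : V → ℝ) :
    momentum E α r v ≤ inMax E α v - level E α r v :=
  csSup_setOf_exists_eq_le hin fun _ huv => sub_le_sub_right (le_inMax huv) _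

end Below

theorem momentum_global_bound_general [Fintype V] {E : V → V → Prop} (hin : ∀ v, ∃ u, E u v)
    (α : V → V → ℝ) (r : V → ℝ) (v : V) :
    momentum E α r v ≤
      imbalanceBelow E α r v + (maxLevelUpTo E α r v - level E α r v) :=
  calc momentum E α r v ≤ inMax E α v - level E α r v := momentum_le_inMax_sub_level (hin v) α r
    _ ≤ imbalanceBelow E α r v + maxLevelUpTo E α r v - level E α r v :=
      sub_le_sub_right (inMax_le_imbalanceBelow_add_maxLevelUpTo hin α r v) _
    _ = imbalanceBelow E α r v + (maxLevelUpTo E α r v - level E α r v) := add_sub_assoc _ _ _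

open scoped Classical in
/-- `m_v ≤ ρ(S_v) + z_v`, where `S_v = {u : y_u < y_v}`,
`ρ(S_v) = ∑_{u ∈ S_v} ρ_u^R` and `z_v = max{x_u : y_u ≤ y_v} − x_v`. -/
theorem momentum_global_bound
    [Fintype V] [Nonempty V] [DecidableEq V] (E : V → V → Prop)
    (hout : ∀ v, ∃ w, E v w) (hin : ∀ v, ∃ u, E u v)
    (hconn : ∀ u v : V, Relation.ReflTransGen E u v)
    (α : V → V → ℝ) (rstar : V → ℝ)
    (hrstar : ∀ σ : ℕ → V, Fair σ → ∀ v,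
      Tendsto (fun t => rvec E α σ t v) atTop (nhds (rstar v)))
    (v : V) :
    momentum E α rstar v ≤
      (∑ u ∈ Finset.univ.filter fun u => height rstar u < height rstar v,
        rhoR E α u) +
      (sSup {c : ℝ | ∃ u, height rstar u ≤ height rstar v ∧
          c = level E α rstar u} -
        level E α rstar v) :=
  momentum_global_bound_general hin α rstar v
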